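/- arXiv:1301.5633 — 2 statements merged into one kernel-verified Lean document; each statement's English description precedes it below -/
import Mathlib

section
/- For every open set U₁ ⊆ X with K ⊆ U₁ there exists an open set U₂ ⊆ X with K ⊆ U₂ such that: for every x ∈ X and T ≥ 0 with φ(t,x) ∈ C for all t ∈ [0,T], if x ∈ U₂ and φ(T,x) ∈ U₂, then φ(t,x) ∈ U₁ for all t ∈ [0,T]. -/
/-!
A point of `C` outside a neighbourhood `U₁` of the trapped set leaves `C` at some time, and by
compactness at a time of absolute value at most some uniform `L`. Let `U₂` consist of the points
whose orbit stays in `U₁` during `[-L, L]`. Along a segment of orbit in `C` with both ends in `U₂`,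
the times within `L` of an end are controlled by that end. The orbit of the point reached at any
other time stays in `C` during `[-L, L]`, so this point belongs to `U₁` by the choice of `L`.
-/

open Set

section TrappedSet

variable {τ X : Type*} [TopologicalSpace τ] [TopologicalSpace X]

/-- The points whose orbit under `φ` stays in `A` at all times of the set `I`. -/
def confinedSet [AddZero τ] (φ : Flow τ X) (I : Set τ) (A : Set X) : Set X :=
  {x | MapsTo (fun t ↦ φ t x) I A}

theorem confinedSet_anti_left [AddZero τ] (φ : Flow τ X) (A : Set X) :
    Antitone fun I ↦ confinedSet φ I A :=
  fun _ _ hIJ _ hx ↦ MapsTo.mono_left hx hIJ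

theorem isOpen_confinedSet [AddZero τ] (φ : Flow τ X) {I : Set τ} {A : Set X}
    (hI : IsCompact I) (hA : IsOpen A) : IsOpen (confinedSet φ I A) :=
  let orbitMap : C(X, C(τ, X)) := ContinuousMap.curry ⟨fun p ↦ φ p.2 p.1, by fun_prop⟩
  (ContinuousMap.isOpen_setOfPred_mapsTo hI hA).preimage orbitMap.continuous

theorem isClosed_confinedSet [AddZero τ] (φ : Flow τ X) (I : Set τ) {A : Set X}
    (hA : IsClosed A) : IsClosed (confinedSet φ I A) :=
  let orbitMap : C(X, C(τ, X)) := ContinuousMap.curry ⟨fun p ↦ φ p.2 p.1, by fun_prop⟩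
  (ContinuousMap.isClosed_setOfPred_mapsTo hA I).preimage orbitMap.continuous

variable [AddCommGroup τ] [LinearOrder τ]

/-- The incoming tail `Γ₋`: the points of `C` whose forward orbit stays in `C`. -/
def incomingTail (φ : Flow τ X) (C : Set X) : Set X :=
  {x | x ∈ C ∧ ∀ t, 0 ≤ t → φ t x ∈ C}

/-- The outgoing tail `Γ₊`: the points of `C` whose backward orbit stays in `C`. -/
def outgoingTail (φ : Flow τ X) (C : Set X) : Set X :=
  {x | x ∈ C ∧ ∀ t, 0 ≤ t → φ (-t) x ∈ C}

/-- The trapped set `K = Γ₊ ∩ Γ₋` of `C`. -/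
def trappedSet (φ : Flow τ X) (C : Set X) : Set X :=
  outgoingTail φ C ∩ incomingTail φ C

variable [IsOrderedAddMonoid τ] {φ : Flow τ X} {C U : Set X} {x : X}

theorem mem_trappedSet_iff_forall : x ∈ trappedSet φ C ↔ ∀ t, φ t x ∈ C := by
  constructor
  · rintro ⟨⟨-, backward⟩, -, forward⟩ t
    rcases le_total 0 t with ht | ht
    · exact forward t ht
    · simpa only [neg_neg] using backward (-t) (neg_nonneg.2 ht)
  · intro h
    have hx : x ∈ C := by simpa only [Flow.map_zero_apply] using h 0
    exact ⟨⟨hx, fun t _ ↦ h (-t)⟩, hx, fun t _ ↦ h t⟩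

theorem isInvariant_trappedSet (φ : Flow τ X) (C : Set X) : IsInvariant φ (trappedSet φ C) := by
  intro t x hx
  rw [mem_trappedSet_iff_forall] at hx ⊢
  intro s
  rw [← φ.map_add]
  exact hx (s + t)

theorem trappedSet_subset_confinedSet (hU : trappedSet φ C ⊆ U) (I : Set τ) :
    trappedSet φ C ⊆ confinedSet φ I U :=
  fun _ hx t _ ↦ hU (isInvariant_trappedSet φ C t hx)

theorem iInter_confinedSet_Icc_subset_trappedSet (φ : Flow τ X) (C : Set X) :
    ⋂ L, confinedSet φ (Icc (-L) L) C ⊆ trappedSet φ C :=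
  fun _ hx ↦ mem_trappedSet_iff_forall.2 fun t ↦
    mem_iInter.1 hx |t| ⟨neg_abs_le t, le_abs_self t⟩

theorem exists_inter_confinedSet_Icc_subset (hC : IsCompact C) (hCclosed : IsClosed C)
    (hU : IsOpen U) (hCU : trappedSet φ C ⊆ U) :
    ∃ L, C ∩ confinedSet φ (Icc (-L) L) C ⊆ U := by
  have closed (L : τ) : IsClosed (confinedSet φ (Icc (-L) L) C) := isClosed_confinedSet φ _ hCclosed
  have anti : Antitone fun L : τ ↦ C ∩ confinedSet φ (Icc (-L) L) C := fun _ _ h ↦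
    inter_subset_inter_right C (confinedSet_anti_left φ C (Icc_subset_Icc (neg_le_neg h) h))
  refine exists_subset_nhds_of_isCompact' anti.directed_ge
    (fun L ↦ hC.inter_right (closed L)) (fun L ↦ hCclosed.inter (closed L)) fun x hx ↦ ?_
  have hx' : x ∈ ⋂ L, confinedSet φ (Icc (-L) L) C := iInter_mono (fun _ ↦ inter_subset_right) hx
  exact hU.mem_nhds (hCU (iInter_confinedSet_Icc_subset_trappedSet φ C hx'))

theorem map_mem_confinedSet_Icc {L T t : τ} (hx : x ∈ confinedSet φ (Icc 0 T) C)
    (hLt : L ≤ t) (htT : t + L ≤ T) : φ t x ∈ confinedSet φ (Icc (-L) L) C := by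
  rintro s ⟨hLs, hsL⟩
  have hst : s + t ∈ Icc 0 T :=
    ⟨neg_le_iff_add_nonneg.1 ((neg_le_neg hLt).trans hLs), by grw [hsL, add_comm, htT]⟩
  simpa only [φ.map_add] using hx hst

theorem mem_confinedSet_Icc_of_endpoints {L T : τ}
    (hL : C ∩ confinedSet φ (Icc (-L) L) C ⊆ U)
    (hxC : x ∈ confinedSet φ (Icc 0 T) C) (hx : x ∈ confinedSet φ (Icc (-L) L) U)
    (hxT : φ T x ∈ confinedSet φ (Icc (-L) L) U) : x ∈ confinedSet φ (Icc 0 T) U := by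
  intro t ht
  rcases le_total t L with near_start | far_start
  · exact hx ⟨(neg_nonpos.2 (ht.1.trans near_start)).trans ht.1, near_start⟩
  rcases le_total T (t + L) with near_end | far_end
  · have htT : t - T ∈ Icc (-L) L :=
      ⟨neg_le_sub_iff_le_add.2 near_end,
        (sub_nonpos.2 ht.2).trans (nonneg_of_le_add_right (ht.2.trans near_end))⟩
    simpa only [← φ.map_add, sub_add_cancel] using hxT htT
  · exact hL ⟨hxC ht, map_mem_confinedSet_Icc hxC far_start far_end⟩

theorem stmt_1_general [CompactIccSpace τ] (hC : IsCompact C) (hCclosed : IsClosed C)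
    (hU : IsOpen U) (hCU : trappedSet φ C ⊆ U) :
    ∃ V, IsOpen V ∧ trappedSet φ C ⊆ V ∧
      ∀ x T, (∀ t ∈ Icc 0 T, φ t x ∈ C) → x ∈ V → φ T x ∈ V → ∀ t ∈ Icc 0 T, φ t x ∈ U := by
  obtain ⟨L, hL⟩ := exists_inter_confinedSet_Icc_subset hC hCclosed hU hCU
  exact ⟨confinedSet φ (Icc (-L) L) U, isOpen_confinedSet φ isCompact_Icc hU,
    trappedSet_subset_confinedSet hCU _,
    fun _ _ hxC hx hxT ↦ mem_confinedSet_Icc_of_endpoints hL hxC hx hxT⟩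

end TrappedSet

/-- For every open `U₁ ⊇ K` there is an open `U₂ ⊇ K` such that any flow segment
that stays in `C`, starts in `U₂` and ends in `U₂`, stays in `U₁` for the whole time. -/
theorem stmt_1 {X : Type*} [MetricSpace X]
    (φ : ℝ → X → X)
    (hφcont : Continuous fun p : ℝ × X => φ p.1 p.2)
    (hφ0 : ∀ x : X, φ 0 x = x)
    (hφadd : ∀ (t s : ℝ) (x : X), φ (t + s) x = φ t (φ s x))
    (C : Set X) (hC : IsCompact C)
    (Γm Γp K : Set X)
    (hΓm : Γm = {x | x ∈ C ∧ ∀ t : ℝ, 0 ≤ t → φ t x ∈ C})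
    (hΓp : Γp = {x | x ∈ C ∧ ∀ t : ℝ, 0 ≤ t → φ (-t) x ∈ C})
    (hK : K = Γp ∩ Γm) :
    ∀ U₁ : Set X, IsOpen U₁ → K ⊆ U₁ →
      ∃ U₂ : Set X, IsOpen U₂ ∧ K ⊆ U₂ ∧
        ∀ (x : X) (T : ℝ), 0 ≤ T → (∀ t ∈ Set.Icc 0 T, φ t x ∈ C) →
          x ∈ U₂ → φ T x ∈ U₂ → ∀ t ∈ Set.Icc 0 T, φ t x ∈ U₁ := by
  subst hK hΓm hΓp
  intro U₁ hU₁ hKU₁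
  let flow : Flow ℝ X := ⟨φ, hφcont, hφadd, hφ0⟩
  obtain ⟨U₂, hU₂, hKU₂, segment⟩ := stmt_1_general (φ := flow) hC hC.isClosed hU₁ hKU₁
  exact ⟨U₂, hU₂, hKU₂, fun x T _ ↦ segment x T⟩
end

section
/- Let a, b ∈ 𝒮(ℝ^{2n}) and define c ∈ 𝒮(ℝ^{2n}) by c(x,ξ) = a(x,ξ) · b(x', 0, ξ). Then there exists C > 0 such that for all h ∈ (0,1] and all u ∈ 𝒮(ℝⁿ), ‖(Op_h^Λ(a) ∘ Op_h(b))u − Op_h^Λ(c)u‖_{L²(ℝⁿ)} ≤ C h^{1/2} ‖u‖_{L²(ℝⁿ)}. -/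
open MeasureTheory
open scoped RealInnerProductSpace

/-- Points of `ℝⁿ` (with `n = m + 1 ≥ 1`) are written `(x', xₙ)` with
`x' ∈ ℝ^{n-1} = EuclideanSpace ℝ (Fin m)` and `xₙ ∈ ℝ`. -/
abbrev V (m : ℕ) : Type := EuclideanSpace ℝ (Fin m) × ℝ

/-- The quantization `Op_h^Λ(a)u(x) = (2πh)^{-n} ∫ e^{(i/h)(x'·ξ' - y·ξ)} a(x,ξ) u(y) dy dξ`. -/
noncomputable def OpL (m : ℕ) (h : ℝ) (a : V m × V m → ℂ) (u : V m → ℂ) (x : V m) : ℂ :=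
  ((2 * Real.pi * h) ^ (m + 1))⁻¹ •
    ∫ p : V m × V m,
      Complex.exp (Complex.I *
        Complex.ofReal ((⟪x.1, p.2.1⟫ - (⟪p.1.1, p.2.1⟫ + p.1.2 * p.2.2)) / h)) *
      a (x, p.2) * u p.1

/-- The standard quantization `Op_h(b)u(x) = (2πh)^{-n} ∫ e^{(i/h)(x−y)·ξ} b(x,ξ) u(y) dy dξ`. -/
noncomputable def OpS (m : ℕ) (h : ℝ) (b : V m × V m → ℂ) (u : V m → ℂ) (x : V m) : ℂ :=
  ((2 * Real.pi * h) ^ (m + 1))⁻¹ •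
    ∫ p : V m × V m,
      Complex.exp (Complex.I *
        Complex.ofReal ((⟪x.1 - p.1.1, p.2.1⟫ + (x.2 - p.1.2) * p.2.2) / h)) *
      b (x, p.2) * u p.1

/-!
With `H = 2πh`, both quantizations are convolutions with a kernel dilated by `H`: the kernel is the
inverse Fourier transform of the symbol in `ξ`, and for `Op_h^Λ` the result is evaluated at
`x₀ = (x', 0)`. Products of symbols become convolutions of kernels, so `Op_h^Λ(a) ∘ Op_h(b)` and
`Op_h^Λ(c)` differ only in that the kernel of `b` is frozen at `x₀ - Hτ` in the first and at `x₀`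
in the second. This costs a factor `H|τ|`, and `|τ|` is absorbed by the rapid decay of the kernel
of `a`. By the Cauchy–Schwarz inequality the square of the difference is at most `H²` times a
weighted average of `|u|²` over translates of the hyperplane `xₙ = 0`; integrating over the position
`Hτₙ` of the hyperplane gives back `‖u‖²` at the price of a factor `H⁻¹`, and `H² · H⁻¹ = H`.
-/

open scoped SchwartzMap FourierTransform ENNReal Convolution

section Slice

variable {E F G : Type*} [NormedAddCommGroup E] [NormedSpace ℝ E] [NormedAddCommGroup F]
  [NormedSpace ℝ F] [NormedAddCommGroup G] [NormedSpace ℝ G]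

lemma norm_compContinuousLinearMap_inr_le {n : ℕ}
    (T : ContinuousMultilinearMap ℝ (fun _ : Fin n => E × F) G) :
    ‖T.compContinuousLinearMap fun _ => ContinuousLinearMap.inr ℝ E F‖ ≤ ‖T‖ :=
  (T.norm_compContinuousLinearMap_le _).trans <| mul_le_of_le_one_right (norm_nonneg _) <|
    Finset.prod_le_one (fun _ _ => norm_nonneg _) fun _ _ =>
      ContinuousLinearMap.norm_inr_le_one ℝ E F

lemma iteratedFDeriv_comp_prodMk {n : ℕ} {f : E × F → G} (hf : ContDiff ℝ n f) (y : E) (ξ : F) :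
    iteratedFDeriv ℝ n (fun ξ => f (y, ξ)) ξ =
      (iteratedFDeriv ℝ n f (y, ξ)).compContinuousLinearMap
        fun _ => ContinuousLinearMap.inr ℝ E F := by
  have hcomp : (fun ξ => f (y, ξ)) = (fun p => f ((y, 0) + p)) ∘ ContinuousLinearMap.inr ℝ E F := by
    ext ξ; simp
  have hshift : ContDiff ℝ n fun p => f ((y, 0) + p) := hf.comp (contDiff_const.add contDiff_id)
  rw [hcomp, ContinuousLinearMap.iteratedFDeriv_comp_right _ hshift _ le_rfl,
    iteratedFDeriv_comp_add_left]
  simp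

/-- The partial function `f(y, ·)` of a Schwartz function on a product. -/
noncomputable def schwartzSlice (f : 𝓢(E × F, G)) (y : E) : 𝓢(F, G) where
  toFun ξ := f (y, ξ)
  smooth' := f.smooth'.comp (contDiff_const.prodMk contDiff_id)
  decay' k n := by
    obtain ⟨C, hC⟩ := f.decay' k n
    refine ⟨C, fun ξ => le_trans ?_ (hC (y, ξ))⟩
    rw [iteratedFDeriv_comp_prodMk (f.smooth n)]
    gcongr
    · exact norm_snd_le (y, ξ)
    · exact norm_compContinuousLinearMap_inr_le _

lemma iteratedFDeriv_schwartzSlice (f : 𝓢(E × F, G)) (n : ℕ) (y : E) (ξ : F) :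
    iteratedFDeriv ℝ n (schwartzSlice f y) ξ =
      (iteratedFDeriv ℝ n f (y, ξ)).compContinuousLinearMap
        fun _ => ContinuousLinearMap.inr ℝ E F :=
  iteratedFDeriv_comp_prodMk (f.smooth n) y ξ

variable (𝕜 : Type*) [NormedField 𝕜] [NormedSpace 𝕜 G] [SMulCommClass ℝ 𝕜 G]

lemma exists_seminorm_schwartzSlice_le (f : 𝓢(E × F, G)) (M k n : ℕ) : ∃ C : ℝ, ∀ y,
    SchwartzMap.seminorm 𝕜 k n (schwartzSlice f y) ≤ C * ((1 + ‖y‖) ^ M)⁻¹ := by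
  refine ⟨2 ^ (k + M) * ((Finset.Iic (k + M, n)).sup
    fun i : ℕ × ℕ => SchwartzMap.seminorm 𝕜 i.1 i.2) f, fun y =>
    SchwartzMap.seminorm_le_bound 𝕜 k n _ (by positivity) fun ξ => ?_⟩
  rw [← div_eq_mul_inv, le_div_iff₀ (by positivity)]
  have hy : ‖y‖ ≤ ‖(y, ξ)‖ := norm_fst_le (y, ξ)
  have hξ : ‖ξ‖ ≤ 1 + ‖(y, ξ)‖ := (norm_snd_le (y, ξ)).trans (by linarith)
  calc ‖ξ‖ ^ k * ‖iteratedFDeriv ℝ n (schwartzSlice f y) ξ‖ * (1 + ‖y‖) ^ M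
      ≤ (1 + ‖(y, ξ)‖) ^ k * ‖iteratedFDeriv ℝ n f (y, ξ)‖ * (1 + ‖(y, ξ)‖) ^ M := by
        rw [iteratedFDeriv_schwartzSlice]
        gcongr
        exact norm_compContinuousLinearMap_inr_le _
    _ = (1 + ‖(y, ξ)‖) ^ (k + M) * ‖iteratedFDeriv ℝ n f (y, ξ)‖ := by ring
    _ ≤ _ := SchwartzMap.one_add_le_sup_seminorm_apply (𝕜 := 𝕜) (m := (k + M, n)) le_rfl le_rfl f _

lemma norm_iteratedFDeriv_sub_le_seminorm (f : 𝓢(E × F, G)) (k n : ℕ) (y z : E) (ξ : F) :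
    ‖ξ‖ ^ k * ‖iteratedFDeriv ℝ n f (z, ξ) - iteratedFDeriv ℝ n f (y, ξ)‖ ≤
      SchwartzMap.seminorm ℝ k (n + 1) f * ‖z - y‖ := by
  have hderiv (w : E) : HasFDerivAt (fun w => ‖ξ‖ ^ k • iteratedFDeriv ℝ n f (w, ξ))
      (‖ξ‖ ^ k • (fderiv ℝ (iteratedFDeriv ℝ n f) (w, ξ)).comp (.inl ℝ E F)) w := by
    have hdiff : Differentiable ℝ (iteratedFDeriv ℝ n f) :=
      (f.smooth (n + 1)).differentiable_iteratedFDeriv (by exact_mod_cast n.lt_succ_self)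
    exact ((hdiff (w, ξ)).hasFDerivAt.comp w (hasFDerivAt_prodMk_left (𝕜 := ℝ) w ξ)).const_smul
      (‖ξ‖ ^ k)
  have hbound (w : E) : ‖‖ξ‖ ^ k • (fderiv ℝ (iteratedFDeriv ℝ n f) (w, ξ)).comp (.inl ℝ E F)‖ ≤
      SchwartzMap.seminorm ℝ k (n + 1) f := by
    grw [ContinuousLinearMap.opNorm_smul_le, norm_pow, norm_norm]
    calc ‖ξ‖ ^ k * ‖(fderiv ℝ (iteratedFDeriv ℝ n f) (w, ξ)).comp (.inl ℝ E F)‖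
        ≤ ‖(w, ξ)‖ ^ k * ‖fderiv ℝ (iteratedFDeriv ℝ n f) (w, ξ)‖ := by
          gcongr
          · exact norm_snd_le (w, ξ)
          · grw [ContinuousLinearMap.opNorm_comp_le, ContinuousLinearMap.norm_inl_le_one, mul_one]
      _ ≤ SchwartzMap.seminorm ℝ k (n + 1) f := by
          rw [norm_fderiv_iteratedFDeriv]
          exact SchwartzMap.le_seminorm ℝ k (n + 1) f (w, ξ)
  have hmean := convex_univ.norm_image_sub_le_of_norm_hasFDerivWithin_le
    (fun w _ => (hderiv w).hasFDerivWithinAt) (fun w _ => hbound w)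
    (Set.mem_univ y) (Set.mem_univ z)
  rwa [← smul_sub, norm_smul, norm_pow, norm_norm] at hmean

lemma seminorm_schwartzSlice_sub_le (f : 𝓢(E × F, G)) (k n : ℕ) (y z : E) :
    SchwartzMap.seminorm 𝕜 k n (schwartzSlice f z - schwartzSlice f y) ≤
      SchwartzMap.seminorm ℝ k (n + 1) f * ‖z - y‖ := by
  refine SchwartzMap.seminorm_le_bound 𝕜 k n _ (by positivity) fun ξ => ?_
  refine le_trans ?_ (norm_iteratedFDeriv_sub_le_seminorm f k n y z ξ)
  have hsub : iteratedFDeriv ℝ n (schwartzSlice f z - schwartzSlice f y : 𝓢(F, G)) ξ =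
      (iteratedFDeriv ℝ n f (z, ξ) - iteratedFDeriv ℝ n f (y, ξ)).compContinuousLinearMap
        fun _ => ContinuousLinearMap.inr ℝ E F := by
    rw [FunLike.coe_sub, iteratedFDeriv_sub_apply ((schwartzSlice f z).smooth n).contDiffAt
      ((schwartzSlice f y).smooth n).contDiffAt, iteratedFDeriv_schwartzSlice,
      iteratedFDeriv_schwartzSlice]
    rfl
  rw [hsub]
  gcongr
  exact norm_compContinuousLinearMap_inr_le _

end Slice

section SchwartzContinuousLinearMap

variable {𝕜 E F E' F' : Type*} [NontriviallyNormedField 𝕜]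
  [NormedAddCommGroup E] [NormedSpace ℝ E]
  [NormedAddCommGroup F] [NormedSpace ℝ F] [NormedSpace 𝕜 F] [SMulCommClass ℝ 𝕜 F]
  [NormedAddCommGroup E'] [NormedSpace ℝ E']
  [NormedAddCommGroup F'] [NormedSpace ℝ F'] [NormedSpace 𝕜 F'] [SMulCommClass ℝ 𝕜 F']

lemma exists_one_add_norm_pow_mul_norm_map_le (T : 𝓢(E, F) →L[𝕜] 𝓢(E', F')) (N : ℕ) :
    ∃ (s : Finset (ℕ × ℕ)) (C : ℝ), 0 ≤ C ∧ ∀ (f : 𝓢(E, F)) (ρ : E'),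
      (1 + ‖ρ‖) ^ N * ‖T f ρ‖ ≤ C * s.sup (schwartzSeminormFamily 𝕜 E F) f := by
  let q : Seminorm 𝕜 𝓢(E, F) :=
    ((Finset.Iic (N, 0)).sup (schwartzSeminormFamily 𝕜 E' F')).comp T.toLinearMap
  have hq : Continuous q :=
    (Seminorm.continuous_finsetSup fun i _ =>
      (schwartz_withSeminorms 𝕜 E' F').continuous_seminorm i).comp T.continuous
  obtain ⟨s, C, -, hC⟩ := Seminorm.bound_of_continuous (schwartz_withSeminorms 𝕜 E F) q hq
  refine ⟨s, 2 ^ N * C, by positivity, fun f ρ => ?_⟩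
  calc (1 + ‖ρ‖) ^ N * ‖T f ρ‖
      ≤ 2 ^ N * q f := by
        rw [← norm_iteratedFDeriv_zero (𝕜 := ℝ)]
        exact SchwartzMap.one_add_le_sup_seminorm_apply (𝕜 := 𝕜) (m := (N, 0)) le_rfl le_rfl (T f) ρ
    _ ≤ 2 ^ N * (C * s.sup (schwartzSeminormFamily 𝕜 E F) f) := by
        gcongr
        exact hC f
    _ = _ := (mul_assoc _ _ _).symm

lemma exists_norm_map_le_of_seminorm_le (T : 𝓢(E, F) →L[𝕜] 𝓢(E', F')) {ι : Type*}
    {f : ι → 𝓢(E, F)} {B : ι → ℝ} (hB : ∀ i, 0 ≤ B i)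
    (hf : ∀ k n : ℕ, ∃ C : ℝ, ∀ i, SchwartzMap.seminorm 𝕜 k n (f i) ≤ C * B i) (N : ℕ) :
    ∃ C : ℝ, 0 ≤ C ∧ ∀ i ρ, ‖T (f i) ρ‖ ≤ C * B i * ((1 + ‖ρ‖) ^ N)⁻¹ := by
  obtain ⟨s, C, hC, hT⟩ := exists_one_add_norm_pow_mul_norm_map_le T N
  choose D hD using hf
  refine ⟨C * ∑ j ∈ s, |D j.1 j.2|, by positivity, fun i ρ => ?_⟩
  rw [← div_eq_mul_inv, le_div_iff₀' (by positivity), mul_assoc]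
  refine (hT (f i) ρ).trans (mul_le_mul_of_nonneg_left ?_ hC)
  have hBi := hB i
  refine Seminorm.finset_sup_apply_le (by positivity) fun j hj => ?_
  calc schwartzSeminormFamily 𝕜 E F j (f i) ≤ |D j.1 j.2| * B i := by
        grw [← le_abs_self]
        exact hD j.1 j.2 i
    _ ≤ (∑ j ∈ s, |D j.1 j.2|) * B i := by
        gcongr
        exact Finset.single_le_sum (f := fun j => |D j.1 j.2|) (fun _ _ => abs_nonneg _) hj

end SchwartzContinuousLinearMap

section Fourier

variable {E F : Type*} [NormedAddCommGroup E] [InnerProductSpace ℝ E] [FiniteDimensional ℝ E]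
  [MeasurableSpace E] [BorelSpace E] [NormedAddCommGroup F] [InnerProductSpace ℝ F]
  [FiniteDimensional ℝ F] [MeasurableSpace F] [BorelSpace F]

/-- The inverse Fourier transform of Schwartz functions on `E × F`. Since `E × F` carries the sup
norm, it is transported from the inner product space `WithLp 2 (E × F)`. -/
noncomputable def prodFourierInv : 𝓢(E × F, ℂ) →L[ℂ] 𝓢(E × F, ℂ) :=
  (SchwartzMap.compCLMOfContinuousLinearEquiv ℂ
      (WithLp.prodContinuousLinearEquiv 2 ℝ E F).symm).comp
    ((FourierTransform.fourierInvCLM ℂ 𝓢(WithLp 2 (E × F), ℂ)).comp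
      (SchwartzMap.compCLMOfContinuousLinearEquiv ℂ (WithLp.prodContinuousLinearEquiv 2 ℝ E F)))

lemma integral_comp_ofLp_prod (g : E × F → ℂ) : ∫ v : WithLp 2 (E × F), g v.ofLp = ∫ p, g p :=
  (WithLp.volume_preserving_symm_measurableEquiv_toLp_prod E F).integral_comp
    (MeasurableEquiv.measurableEmbedding _) g

lemma prodFourierInv_apply (f : 𝓢(E × F, ℂ)) (p : E × F) :
    prodFourierInv f p =
      ∫ q : E × F, Complex.exp (↑(2 * Real.pi * (⟪q.1, p.1⟫ + ⟪q.2, p.2⟫)) * Complex.I) * f q := by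
  rw [← integral_comp_ofLp_prod]
  change 𝓕⁻ (SchwartzMap.compCLMOfContinuousLinearEquiv ℂ
    (WithLp.prodContinuousLinearEquiv 2 ℝ E F) f) (WithLp.toLp 2 p) = _
  rw [SchwartzMap.fourierInv_coe, Real.fourierInv_eq']
  rfl

lemma prodFourierInv_mul (f g : 𝓢(E × F, ℂ)) (p : E × F) :
    prodFourierInv (SchwartzMap.pairing (ContinuousLinearMap.mul ℂ ℂ) f g) p =
      ∫ q, prodFourierInv f q * prodFourierInv g (p - q) := by
  let e := WithLp.prodContinuousLinearEquiv 2 ℝ E F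
  let f₂ := SchwartzMap.compCLMOfContinuousLinearEquiv ℂ e f
  let g₂ := SchwartzMap.compCLMOfContinuousLinearEquiv ℂ e g
  have hconv : 𝓕⁻ (SchwartzMap.pairing (ContinuousLinearMap.mul ℂ ℂ) f₂ g₂) =
      SchwartzMap.convolution (ContinuousLinearMap.mul ℂ ℂ) (𝓕⁻ f₂) (𝓕⁻ g₂) := by
    simp [SchwartzMap.convolution]
  rw [← integral_comp_ofLp_prod]
  change 𝓕⁻ (SchwartzMap.pairing (ContinuousLinearMap.mul ℂ ℂ) f₂ g₂) (WithLp.toLp 2 p) = _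
  rw [hconv, SchwartzMap.convolution_apply]
  rfl

end Fourier

section DilatedConvolution

/-- The convolution of `u` with the kernel `k` dilated by `H`, normalised to preserve the integral
of `k`. -/
noncomputable def dilatedConv {W : Type*} [AddCommGroup W] [Module ℝ W] [MeasureSpace W] (H : ℝ)
    (k u : W → ℂ) (y : W) : ℂ :=
  ∫ τ, k τ * u (y - H • τ)

lemma enorm_integral_mul_dilatedConv_le {W : Type*} [AddCommGroup W] [Module ℝ W]
    [MeasureSpace W] (H : ℝ) (k : W → ℂ) (l : W → W → ℂ) (u : W → ℂ) (y : W) :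
    ‖∫ τ, k τ * dilatedConv H (l τ) u (y - H • τ)‖ₑ ≤
      ∫⁻ τ, ∫⁻ ρ, ‖k τ * l τ ρ‖ₑ * ‖u (y - H • τ - H • ρ)‖ₑ := by
  refine (enorm_integral_le_lintegral_enorm _).trans (lintegral_mono fun τ => ?_)
  simp_rw [enorm_mul, mul_assoc]
  rw [lintegral_const_mul' _ _ enorm_ne_top]
  gcongr
  simp_rw [← enorm_mul]
  exact enorm_integral_le_lintegral_enorm _

variable {W : Type*} [NormedAddCommGroup W] [NormedSpace ℝ W] [FiniteDimensional ℝ W]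
  [MeasureSpace W] [BorelSpace W] [(volume : Measure W).IsAddHaarMeasure]

lemma dilatedConv_eq_convolution {H : ℝ} (hH : H ≠ 0) (k u : W → ℂ) (y : W) :
    dilatedConv H k u y = |(H ^ Module.finrank ℝ W)⁻¹| •
      ((fun z => k (H⁻¹ • z)) ⋆[ContinuousLinearMap.mul ℂ ℂ] u) y := by
  have hscale := Measure.integral_comp_smul volume (fun z => k (H⁻¹ • z) * u (y - z)) H
  simpa only [inv_smul_smul₀ hH] using! hscale

lemma integrable_dilatedConv {H : ℝ} (hH : H ≠ 0) {k u : W → ℂ} (hk : Integrable k)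
    (hu : Integrable u) : Integrable (dilatedConv H k u) := by
  rw [show dilatedConv H k u = _ from funext (dilatedConv_eq_convolution hH k u)]
  exact ((hk.comp_smul (inv_ne_zero hH)).integrable_convolution
    (ContinuousLinearMap.mul ℂ ℂ) hu).smul |(H ^ Module.finrank ℝ W)⁻¹|

lemma integrable_comp_sub_smul {H : ℝ} (hH : H ≠ 0) {v : W → ℂ} (hv : Integrable v) (y : W) :
    Integrable fun τ => v (y - H • τ) :=
  (hv.comp_sub_left y).comp_smul hH

lemma integrable_kernel_mul_comp_sub_smul {H : ℝ} (hH : H ≠ 0) (k : 𝓢(W, ℂ)) {v : W → ℂ}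
    (hv : Integrable v) (y : W) : Integrable fun τ => k τ * v (y - H • τ) :=
  (integrable_comp_sub_smul hH hv y).bdd_mul k.continuous.aestronglyMeasurable
    (.of_forall (SchwartzMap.norm_le_seminorm ℂ k))

lemma dilatedConv_sub_left {H : ℝ} (hH : H ≠ 0) (k l : 𝓢(W, ℂ)) {u : W → ℂ} (hu : Integrable u)
    (y : W) : dilatedConv H ⇑(k - l) u y = dilatedConv H k u y - dilatedConv H l u y := by
  unfold dilatedConv
  rw [← integral_sub (integrable_kernel_mul_comp_sub_smul hH k hu y)
    (integrable_kernel_mul_comp_sub_smul hH l hu y)]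
  simp only [sub_apply, sub_mul]

lemma dilatedConv_dilatedConv {H : ℝ} (hH : H ≠ 0) (k l : 𝓢(W, ℂ)) {u : W → ℂ}
    (hu : Integrable u) (y : W) :
    dilatedConv H k (dilatedConv H l u) y =
      dilatedConv H (fun σ => ∫ τ, k τ * l (σ - τ)) u y := by
  have hint : Integrable fun p : W × W => k p.1 * l (p.2 - p.1) * u (y - H • p.2) := by
    have hprod : Integrable fun p : W × W => k p.1 * u (y - H • p.2) :=
      k.integrable.mul_prod (integrable_comp_sub_smul hH hu y)
    refine (hprod.bdd_mul (f := fun p : W × W => l (p.2 - p.1))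
      (Continuous.aestronglyMeasurable (by fun_prop))
      (.of_forall fun p => SchwartzMap.norm_le_seminorm ℂ l _)).congr (.of_forall fun p => ?_)
    ring
  calc ∫ τ, k τ * ∫ ρ, l ρ * u (y - H • τ - H • ρ)
      = ∫ τ, ∫ σ, k τ * l (σ - τ) * u (y - H • σ) := by
        congr! 2 with τ
        rw [← integral_const_mul, ← integral_sub_right_eq_self _ τ]
        simp only [smul_sub, mul_assoc, sub_sub, add_sub_cancel]
    _ = ∫ σ, ∫ τ, k τ * l (σ - τ) * u (y - H • σ) := integral_integral_swap hint
    _ = ∫ σ, (∫ τ, k τ * l (σ - τ)) * u (y - H • σ) := by simp only [integral_mul_const]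

end DilatedConvolution

section ProductSpace

variable {E F : Type*} [NormedAddCommGroup E] [NormedSpace ℝ E] [FiniteDimensional ℝ E]
  [MeasureSpace E] [BorelSpace E] [(volume : Measure E).IsAddHaarMeasure]
  [NormedAddCommGroup F] [NormedSpace ℝ F] [FiniteDimensional ℝ F]
  [MeasureSpace F] [BorelSpace F] [(volume : Measure F).IsAddHaarMeasure]

instance isAddHaarMeasure_volume_prod : (volume : Measure (E × F)).IsAddHaarMeasure :=
  inferInstanceAs ((volume : Measure E).prod (volume : Measure F)).IsAddHaarMeasure

lemma integrable_schwartz_mul_prodMk {X : Type*} [MeasureSpace X] [SFinite (volume : Measure X)]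
    (f : 𝓢(E × F, ℂ)) {g : X → ℂ} (hg : Integrable g) :
    Integrable fun p : E × (X × F) => f (p.1, p.2.2) * g p.2.1 := by
  have hrearrange : MeasurePreserving fun p : E × (X × F) => ((p.1, p.2.2), p.2.1) :=
    (measurePreserving_prodAssoc volume volume volume).symm.comp
      ((MeasurePreserving.id volume).prod Measure.measurePreserving_swap)
  exact hrearrange.integrable_comp_of_integrable (f.integrable.mul_prod hg)

end ProductSpace

section Kernel

variable {E F : Type*} [NormedAddCommGroup E] [InnerProductSpace ℝ E] [FiniteDimensional ℝ E]
  [MeasurableSpace E] [BorelSpace E] [NormedAddCommGroup F] [InnerProductSpace ℝ F]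
  [FiniteDimensional ℝ F] [MeasurableSpace F] [BorelSpace F]

lemma integrable_exp_mul_mul (f : 𝓢(E × F, ℂ)) {v : E × F → ℂ} (hv : Integrable v) (h : ℝ)
    (y : E × F) : Integrable fun p : (E × F) × (E × F) => Complex.exp (Complex.I *
      ↑((⟪y.1 - p.1.1, p.2.1⟫ + ⟪y.2 - p.1.2, p.2.2⟫) / h)) * f p.2 * v p.1 := by
  simp_rw [mul_assoc, mul_comm (f _)]
  refine (hv.mul_prod f.integrable).bdd_mul (c := 1)
    (Continuous.aestronglyMeasurable (by fun_prop)) (.of_forall fun p => ?_)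
  rw [mul_comm, Complex.norm_exp_ofReal_mul_I]

lemma prodFourierInv_inv_smul (f : 𝓢(E × F, ℂ)) (h : ℝ) (z : E × F) :
    prodFourierInv f ((2 * Real.pi * h)⁻¹ • z) =
      ∫ ξ : E × F, Complex.exp (Complex.I * ↑((⟪z.1, ξ.1⟫ + ⟪z.2, ξ.2⟫) / h)) * f ξ := by
  have hphase (ξ : E × F) : 2 * Real.pi * (⟪ξ.1, ((2 * Real.pi * h)⁻¹ • z).1⟫ +
      ⟪ξ.2, ((2 * Real.pi * h)⁻¹ • z).2⟫) = (⟪z.1, ξ.1⟫ + ⟪z.2, ξ.2⟫) / h := by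
    simp only [Prod.smul_fst, Prod.smul_snd, inner_smul_right, real_inner_comm z.1,
      real_inner_comm z.2]
    field_simp
  simp only [prodFourierInv_apply, hphase, mul_comm Complex.I]

lemma dilatedConv_prodFourierInv (f : 𝓢(E × F, ℂ)) {v : E × F → ℂ} (hv : Integrable v) {h : ℝ}
    (hh : 0 < h) (y : E × F) :
    dilatedConv (2 * Real.pi * h) (prodFourierInv f) v y =
      ((2 * Real.pi * h) ^ Module.finrank ℝ (E × F))⁻¹ • ∫ p : (E × F) × (E × F),
        Complex.exp (Complex.I *
          ↑((⟪y.1 - p.1.1, p.2.1⟫ + ⟪y.2 - p.1.2, p.2.2⟫) / h)) * f p.2 * v p.1 := by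
  have hH : 0 < 2 * Real.pi * h := by positivity
  rw [dilatedConv_eq_convolution hH.ne', convolution_mul_swap, abs_of_pos (by positivity),
    Measure.volume_eq_prod (E × F), integral_prod _ (integrable_exp_mul_mul f hv h y)]
  simp only [integral_mul_const, prodFourierInv_inv_smul, Prod.fst_sub, Prod.snd_sub]

variable {Y : Type*} [NormedAddCommGroup Y] [NormedSpace ℝ Y]

/-- The convolution kernel `𝓕⁻(a(y, ·))` of the operator with symbol `a` frozen at `y`. -/
noncomputable def symbolKernel (a : 𝓢(Y × (E × F), ℂ)) (y : Y) : 𝓢(E × F, ℂ) :=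
  prodFourierInv (schwartzSlice a y)

lemma exists_norm_symbolKernel_le (a : 𝓢(Y × (E × F), ℂ)) (M N : ℕ) :
    ∃ C : ℝ, 0 ≤ C ∧ ∀ y τ,
      ‖symbolKernel a y τ‖ ≤ C * ((1 + ‖y‖) ^ M)⁻¹ * ((1 + ‖τ‖) ^ N)⁻¹ :=
  exists_norm_map_le_of_seminorm_le prodFourierInv (fun _ => by positivity)
    (exists_seminorm_schwartzSlice_le ℂ a M) N

lemma exists_norm_symbolKernel_sub_le (a : 𝓢(Y × (E × F), ℂ)) (N : ℕ) :
    ∃ C : ℝ, 0 ≤ C ∧ ∀ y z τ,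
      ‖(symbolKernel a z - symbolKernel a y) τ‖ ≤ C * ‖z - y‖ * ((1 + ‖τ‖) ^ N)⁻¹ := by
  obtain ⟨C, hC, hbound⟩ := exists_norm_map_le_of_seminorm_le prodFourierInv
    (f := fun p : Y × Y => schwartzSlice a p.2 - schwartzSlice a p.1)
    (fun p => norm_nonneg (p.2 - p.1))
    (fun k n => ⟨_, fun p => seminorm_schwartzSlice_sub_le ℂ a k n p.1 p.2⟩) N
  refine ⟨C, hC, fun y z τ => ?_⟩
  rw [symbolKernel, symbolKernel, ← map_sub]
  exact hbound (y, z) τ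

end Kernel

section Operators

variable {m : ℕ} {h : ℝ} {u v : V m → ℂ}

lemma finrank_V : Module.finrank ℝ (V m) = m + 1 := by simp

lemma opL_eq_dilatedConv {a : V m × V m → ℂ} {f : 𝓢(V m, ℂ)} {x : V m}
    (hf : ∀ ξ, a (x, ξ) = f ξ) (hv : Integrable v) (hh : 0 < h) :
    OpL m h a v x = dilatedConv (2 * Real.pi * h) (prodFourierInv f) v (x.1, 0) := by
  have hphase (p : V m × V m) : ⟪x.1, p.2.1⟫ - (⟪p.1.1, p.2.1⟫ + p.1.2 * p.2.2) =
      ⟪x.1 - p.1.1, p.2.1⟫ + ⟪0 - p.1.2, p.2.2⟫ := by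
    simp only [inner_sub_left, inner_zero_left, Real.inner_apply]
    ring
  simp only [dilatedConv_prodFourierInv f hv hh, OpL, hphase, hf, finrank_V]

lemma opL_mul_eq_dilatedConv (a b : 𝓢(V m × V m, ℂ)) (hu : Integrable u) (hh : 0 < h) (x : V m) :
    OpL m h (fun p => a p * b ((p.1.1, 0), p.2)) u x =
      dilatedConv (2 * Real.pi * h) (symbolKernel a x)
        (dilatedConv (2 * Real.pi * h) (symbolKernel b (x.1, 0)) u) (x.1, 0) := by
  rw [dilatedConv_dilatedConv (by positivity) _ _ hu]
  simp_rw [symbolKernel, ← prodFourierInv_mul]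
  exact opL_eq_dilatedConv (fun _ => rfl) hu hh

lemma opS_eq_dilatedConv (b : 𝓢(V m × V m, ℂ)) (hv : Integrable v) (hh : 0 < h) (x : V m) :
    OpS m h b v x = dilatedConv (2 * Real.pi * h) (symbolKernel b x) v x := by
  have hphase (p : V m × V m) : ⟪x.1 - p.1.1, p.2.1⟫ + (x.2 - p.1.2) * p.2.2 =
      ⟪x.1 - p.1.1, p.2.1⟫ + ⟪x.2 - p.1.2, p.2.2⟫ := by
    rw [Real.inner_apply]
  simp only [symbolKernel, dilatedConv_prodFourierInv _ hv hh, OpS, hphase, finrank_V]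
  rfl

lemma integrable_opS (b : 𝓢(V m × V m, ℂ)) (hu : Integrable u) : Integrable (OpS m h b u) := by
  have hint : Integrable fun q : V m × (V m × V m) => Complex.exp (Complex.I *
      ↑((⟪q.1.1 - q.2.1.1, q.2.2.1⟫ + (q.1.2 - q.2.1.2) * q.2.2.2) / h)) *
        (b (q.1, q.2.2) * u q.2.1) := by
    refine (integrable_schwartz_mul_prodMk b hu).bdd_mul (c := 1)
      (Continuous.aestronglyMeasurable (by fun_prop)) (.of_forall fun q => ?_)
    rw [mul_comm, Complex.norm_exp_ofReal_mul_I]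
  unfold OpS
  simp_rw [mul_assoc (Complex.exp _)]
  exact hint.integral_prod_left.smul ((2 * Real.pi * h) ^ (m + 1))⁻¹

lemma opL_congr_ae (a : V m × V m → ℂ) (huv : u =ᵐ[volume] v) : OpL m h a u = OpL m h a v := by
  ext x
  refine congrArg _ (integral_congr_ae ?_)
  filter_upwards [Measure.quasiMeasurePreserving_fst.ae_eq_comp huv] with p hp
  exact congrArg _ hp

lemma opS_congr_ae (b : V m × V m → ℂ) (huv : u =ᵐ[volume] v) : OpS m h b u = OpS m h b v := by
  ext x
  refine congrArg _ (integral_congr_ae ?_)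
  filter_upwards [Measure.quasiMeasurePreserving_fst.ae_eq_comp huv] with p hp
  exact congrArg _ hp

lemma opL_opS_sub_opL_eq_integral (a b : 𝓢(V m × V m, ℂ)) (hu : Integrable u) (hh : 0 < h)
    (x : V m) :
    OpL m h a (OpS m h b u) x - OpL m h (fun p => a p * b ((p.1.1, 0), p.2)) u x =
      ∫ τ, symbolKernel a x τ * dilatedConv (2 * Real.pi * h)
        (symbolKernel b ((x.1, 0) - (2 * Real.pi * h) • τ) - symbolKernel b (x.1, 0)) u
        ((x.1, 0) - (2 * Real.pi * h) • τ) := by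
  have hH : 2 * Real.pi * h ≠ 0 := by positivity
  rw [opL_eq_dilatedConv (a := a) (f := schwartzSlice a x) (fun _ => rfl) (integrable_opS b hu) hh,
    opL_mul_eq_dilatedConv a b hu hh]
  simp_rw [dilatedConv_sub_left hH _ _ hu, mul_sub, ← opS_eq_dilatedConv b hu hh]
  exact (integral_sub (integrable_kernel_mul_comp_sub_smul hH _ (integrable_opS b hu) _)
    (integrable_kernel_mul_comp_sub_smul hH _
      (integrable_dilatedConv hH (symbolKernel b _).integrable hu) _)).symm

end Operators

section Weights

/-- The weight `(1 + ‖x‖)^(-N)` as an extended nonnegative real; it measures the decay of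
kernels. -/
noncomputable def decayWeight {E : Type*} [Norm E] (N : ℕ) (x : E) : ℝ≥0∞ :=
  ENNReal.ofReal ((1 + ‖x‖) ^ N)⁻¹

lemma decayWeight_le_of_norm_le {E F : Type*} [NormedAddCommGroup E] [NormedAddCommGroup F]
    (N : ℕ) {x : E} {y : F} (hxy : ‖y‖ ≤ ‖x‖) : decayWeight N x ≤ decayWeight N y := by
  unfold decayWeight
  gcongr

variable {E : Type*} [NormedAddCommGroup E]

lemma decayWeight_one_sq (x : E) : decayWeight 1 x ^ 2 = decayWeight 2 x := by
  rw [decayWeight, decayWeight, ← ENNReal.ofReal_pow (by positivity), pow_one, inv_pow]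

@[fun_prop]
lemma measurable_decayWeight [MeasurableSpace E] [OpensMeasurableSpace E] (N : ℕ) :
    Measurable (decayWeight N : E → ℝ≥0∞) := by
  unfold decayWeight
  fun_prop

lemma lintegral_decayWeight_ne_top [NormedSpace ℝ E] [FiniteDimensional ℝ E] [MeasureSpace E]
    [BorelSpace E] [(volume : Measure E).IsAddHaarMeasure] {N : ℕ}
    (hN : Module.finrank ℝ E < N) : ∫⁻ x : E, decayWeight N x ≠ ∞ := by
  have hfin := finite_integral_one_add_norm (E := E) (μ := volume) (r := N) (by exact_mod_cast hN)
  have hrpow (x : E) : ENNReal.ofReal ((1 + ‖x‖) ^ (-(N : ℝ))) = decayWeight N x := by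
    rw [decayWeight, Real.rpow_neg (by positivity), Real.rpow_natCast]
  simpa only [hrpow] using hfin.ne

end Weights

section WeightedInequalities

lemma sq_lintegral_mul_le {X : Type*} [MeasurableSpace X] (μ : Measure X) {w f : X → ℝ≥0∞}
    (hw : Measurable w) (hf : Measurable f) :
    (∫⁻ x, w x * f x ∂μ) ^ 2 ≤ (∫⁻ x, w x ∂μ) * ∫⁻ x, w x * f x ^ 2 ∂μ := by
  have hsqrt (t : ℝ≥0∞) : (t ^ (1 / 2 : ℝ)) ^ 2 = t := by
    rw [← ENNReal.rpow_natCast, ← ENNReal.rpow_mul]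
    norm_num
  have hholder := ENNReal.lintegral_mul_le_Lp_mul_Lq μ Real.HolderConjugate.two_two
    (f := fun x => w x ^ (1 / 2 : ℝ)) (g := fun x => w x ^ (1 / 2 : ℝ) * f x)
    (by fun_prop) (by fun_prop)
  simp only [Pi.mul_apply, ← mul_assoc, ← sq, hsqrt, ENNReal.rpow_two, mul_pow] at hholder
  grw [hholder, mul_pow, hsqrt, hsqrt]

lemma eLpNorm_two_le_of_lintegral_sq_le {X G : Type*} [MeasurableSpace X] [NormedAddCommGroup G]
    {μ : Measure X} {f g : X → G} {K : ℝ≥0∞}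
    (hfg : ∫⁻ x, ‖f x‖ₑ ^ 2 ∂μ ≤ K ^ 2 * ∫⁻ x, ‖g x‖ₑ ^ 2 ∂μ) :
    eLpNorm f 2 μ ≤ K * eLpNorm g 2 μ := by
  have hsq (f : X → G) : eLpNorm f 2 μ ^ 2 = ∫⁻ x, ‖f x‖ₑ ^ 2 ∂μ := by
    simpa using eLpNorm_nnreal_pow_eq_lintegral (f := f) (μ := μ) (p := 2) two_ne_zero
  rwa [← ENNReal.pow_le_pow_left_iff two_ne_zero, mul_pow, hsq, hsq]

lemma lintegral_comp_sub_mul {g : ℝ → ℝ≥0∞} (hg : Measurable g) (c : ℝ) {H : ℝ} (hH : 0 < H) :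
    ∫⁻ s, g (c - H * s) = ENNReal.ofReal H⁻¹ * ∫⁻ s, g s := by
  rw [← lintegral_map (f := fun s => g (c - s)) (by fun_prop) (measurable_const_mul H),
    Real.map_volume_mul_left hH.ne', lintegral_smul_measure, abs_of_pos (inv_pos.2 hH),
    smul_eq_mul, lintegral_sub_left_eq_self]

variable {E : Type*} [NormedAddCommGroup E] [NormedSpace ℝ E] [FiniteDimensional ℝ E]
  [MeasureSpace E] [BorelSpace E] [(volume : Measure E).IsAddHaarMeasure]

lemma lintegral_slice_sub_smul_le {f : E × ℝ → ℝ≥0∞} (hf : Measurable f) {H : ℝ} (hH : 0 < H)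
    (N : ℕ) (z : E × ℝ) :
    ∫⁻ p : E × ℝ, decayWeight N p * ∫⁻ x : E, f ((x, 0) - z - H • p) ≤
      (∫⁻ r : E, decayWeight N r) * (ENNReal.ofReal H⁻¹ * ∫⁻ p, f p) := by
  let g (s : ℝ) : ℝ≥0∞ := ∫⁻ x : E, f (x, s)
  have hg : Measurable g := hf.lintegral_prod_left'
  have hslice (p : E × ℝ) : ∫⁻ x : E, f ((x, 0) - z - H • p) = g (-z.2 - H * p.2) := by
    change _ = ∫⁻ x : E, f (x, -z.2 - H * p.2)
    rw [← lintegral_sub_right_eq_self (fun x => f (x, -z.2 - H * p.2)) (z.1 + H • p.1)]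
    simp [← sub_sub, Prod.sub_def]
  calc ∫⁻ p : E × ℝ, decayWeight N p * ∫⁻ x : E, f ((x, 0) - z - H • p)
      ≤ ∫⁻ p : E × ℝ, decayWeight N p.1 * g (-z.2 - H * p.2) := by
        simp_rw [hslice]
        gcongr with p
        exact decayWeight_le_of_norm_le N (norm_fst_le p)
    _ = (∫⁻ r : E, decayWeight N r) * (ENNReal.ofReal H⁻¹ * ∫⁻ s, g s) := by
        rw [Measure.volume_eq_prod, lintegral_prod_mul (g := fun s => g (-z.2 - H * s))
          (by fun_prop) (by fun_prop), lintegral_comp_sub_mul hg _ hH]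
    _ = (∫⁻ r : E, decayWeight N r) * (ENNReal.ofReal H⁻¹ * ∫⁻ p, f p) := by
        rw [Measure.volume_eq_prod, lintegral_prod_symm' _ hf]

lemma lintegral_slice_sub_smul_sub_smul_le {f : E × ℝ → ℝ≥0∞} (hf : Measurable f) {H : ℝ}
    (hH : 0 < H) (N : ℕ) :
    ∫⁻ x : E, ∫⁻ p : (E × ℝ) × (E × ℝ), decayWeight N p.1 * decayWeight N p.2 *
        f ((x, 0) - H • p.1 - H • p.2) ≤
      (∫⁻ τ : E × ℝ, decayWeight N τ) *
        ((∫⁻ r : E, decayWeight N r) * (ENNReal.ofReal H⁻¹ * ∫⁻ p, f p)) := by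
  have hslice : Measurable fun p : (E × ℝ) × (E × ℝ) =>
      ∫⁻ x : E, f ((x, 0) - H • p.1 - H • p.2) :=
    Measurable.lintegral_prod_right' (f := fun q : ((E × ℝ) × (E × ℝ)) × E =>
      f ((q.2, 0) - H • q.1.1 - H • q.1.2)) (by fun_prop)
  calc ∫⁻ x : E, ∫⁻ p : (E × ℝ) × (E × ℝ), decayWeight N p.1 * decayWeight N p.2 *
        f ((x, 0) - H • p.1 - H • p.2)
      = ∫⁻ p : (E × ℝ) × (E × ℝ), decayWeight N p.1 * decayWeight N p.2 *
          ∫⁻ x : E, f ((x, 0) - H • p.1 - H • p.2) := by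
        rw [lintegral_lintegral_swap (by fun_prop)]
        exact lintegral_congr fun p => lintegral_const_mul _ (by fun_prop)
    _ = ∫⁻ τ : E × ℝ, decayWeight N τ *
          ∫⁻ ρ : E × ℝ, decayWeight N ρ * ∫⁻ x : E, f ((x, 0) - H • τ - H • ρ) := by
        rw [Measure.volume_eq_prod (E × ℝ), lintegral_prod _ (by fun_prop)]
        refine lintegral_congr fun τ => ?_
        simp_rw [mul_assoc]
        exact lintegral_const_mul _
          ((measurable_decayWeight N).mul (hslice.comp measurable_prodMk_left))
    _ ≤ ∫⁻ τ : E × ℝ, decayWeight N τ *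
          ((∫⁻ r : E, decayWeight N r) * (ENNReal.ofReal H⁻¹ * ∫⁻ p, f p)) := by
        gcongr with τ
        exact lintegral_slice_sub_smul_le hf hH N (H • τ)
    _ = _ := lintegral_mul_const _ (by fun_prop)

lemma lintegral_sq_decayWeight_mul_slice_le {f : E × ℝ → ℝ≥0∞} (hf : Measurable f) {H : ℝ}
    (hH : 0 < H) (N : ℕ) :
    ∫⁻ x : E × ℝ, (decayWeight 1 x * ∫⁻ p : (E × ℝ) × (E × ℝ),
        decayWeight N p.1 * decayWeight N p.2 * f ((x.1, 0) - H • p.1 - H • p.2)) ^ 2 ≤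
      (∫⁻ τ : E × ℝ, decayWeight N τ) ^ 3 * (∫⁻ r : E, decayWeight N r) *
        (∫⁻ s : ℝ, decayWeight 2 s) * (ENNReal.ofReal H⁻¹ * ∫⁻ p, f p ^ 2) := by
  let Φ (x : E) : ℝ≥0∞ := ∫⁻ p : (E × ℝ) × (E × ℝ),
    decayWeight N p.1 * decayWeight N p.2 * f ((x, 0) - H • p.1 - H • p.2) ^ 2
  have hΦ : Measurable Φ :=
    Measurable.lintegral_prod_right' (f := fun q : E × ((E × ℝ) × (E × ℝ)) =>
      decayWeight N q.2.1 * decayWeight N q.2.2 * f ((q.1, 0) - H • q.2.1 - H • q.2.2) ^ 2)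
      (by fun_prop)
  have hmass : ∫⁻ p : (E × ℝ) × (E × ℝ), decayWeight N p.1 * decayWeight N p.2 =
      (∫⁻ τ : E × ℝ, decayWeight N τ) ^ 2 := by
    rw [Measure.volume_eq_prod (E × ℝ), lintegral_prod_mul (by fun_prop) (by fun_prop), sq]
  calc ∫⁻ x : E × ℝ, (decayWeight 1 x * ∫⁻ p : (E × ℝ) × (E × ℝ),
        decayWeight N p.1 * decayWeight N p.2 * f ((x.1, 0) - H • p.1 - H • p.2)) ^ 2
      ≤ ∫⁻ x : E × ℝ, (∫⁻ τ : E × ℝ, decayWeight N τ) ^ 2 * (Φ x.1 * decayWeight 2 x.2) := by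
        gcongr with x
        grw [mul_pow, sq_lintegral_mul_le _ (by fun_prop) (by fun_prop), hmass,
          decayWeight_one_sq, decayWeight_le_of_norm_le 2 (norm_snd_le x), mul_comm, mul_assoc]
    _ = (∫⁻ τ : E × ℝ, decayWeight N τ) ^ 2 * ((∫⁻ x, Φ x) * ∫⁻ s : ℝ, decayWeight 2 s) := by
        rw [lintegral_const_mul _ (by fun_prop), Measure.volume_eq_prod E,
          lintegral_prod_mul (by fun_prop) (by fun_prop)]
    _ ≤ _ := by
        grw [lintegral_slice_sub_smul_sub_smul_le (hf.pow_const 2) hH N]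
        ring_nf
        rfl

end WeightedInequalities

section Estimate

lemma exists_enorm_symbolKernel_mul_sub_le {X E F : Type*} [NormedAddCommGroup X] [NormedSpace ℝ X]
    [NormedAddCommGroup E] [InnerProductSpace ℝ E] [FiniteDimensional ℝ E]
    [MeasurableSpace E] [BorelSpace E] [NormedAddCommGroup F] [InnerProductSpace ℝ F]
    [FiniteDimensional ℝ F] [MeasurableSpace F] [BorelSpace F]
    (a : 𝓢(X × (E × F), ℂ)) (b : 𝓢((E × F) × (E × F), ℂ)) (M N : ℕ) :
    ∃ A : ℝ≥0∞, A ≠ ∞ ∧ ∀ H : ℝ, 0 ≤ H → ∀ x y τ ρ,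
      ‖symbolKernel a x τ * (symbolKernel b (y - H • τ) - symbolKernel b y) ρ‖ₑ ≤
        A * ENNReal.ofReal H * decayWeight M x * (decayWeight N τ * decayWeight N ρ) := by
  obtain ⟨A, hA, ha⟩ := exists_norm_symbolKernel_le a M (N + 1)
  obtain ⟨B, hB, hb⟩ := exists_norm_symbolKernel_sub_le b N
  refine ⟨ENNReal.ofReal (A * B), ENNReal.ofReal_ne_top, fun H hH x y τ ρ => ?_⟩
  rw [decayWeight, decayWeight, decayWeight, ← ofReal_norm, ← ENNReal.ofReal_mul (by positivity),
    ← ENNReal.ofReal_mul (by positivity), ← ENNReal.ofReal_mul (by positivity),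
    ← ENNReal.ofReal_mul (by positivity), norm_mul]
  refine ENNReal.ofReal_le_ofReal ?_
  have hshift : ‖y - H • τ - y‖ ≤ H * (1 + ‖τ‖) := by
    rw [sub_sub_cancel_left, norm_neg, norm_smul, Real.norm_of_nonneg hH]
    gcongr
    linarith
  grw [ha x τ, hb y (y - H • τ) ρ, hshift]
  apply le_of_eq
  field_simp
  ring

variable {m : ℕ}

lemma exists_enorm_opL_opS_sub_opL_le (a b : 𝓢(V m × V m, ℂ)) (N : ℕ) :
    ∃ A : ℝ≥0∞, A ≠ ∞ ∧ ∀ h : ℝ, 0 < h → ∀ u : V m → ℂ, Measurable u → Integrable u → ∀ x,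
      ‖OpL m h a (OpS m h b u) x - OpL m h (fun p => a p * b ((p.1.1, 0), p.2)) u x‖ₑ ≤
        A * ENNReal.ofReal (2 * Real.pi * h) * (decayWeight 1 x * ∫⁻ p : V m × V m,
          decayWeight N p.1 * decayWeight N p.2 *
            ‖u ((x.1, 0) - (2 * Real.pi * h) • p.1 - (2 * Real.pi * h) • p.2)‖ₑ) := by
  obtain ⟨A, hA, hkernel⟩ := exists_enorm_symbolKernel_mul_sub_le a b 1 N
  refine ⟨A, hA, fun h hh u hu hu' x => ?_⟩
  have hH : 0 ≤ 2 * Real.pi * h := by positivity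
  rw [opL_opS_sub_opL_eq_integral a b hu' hh]
  generalize 2 * Real.pi * h = H at hH ⊢
  have hconst : A * ENNReal.ofReal H * decayWeight 1 x ≠ ∞ :=
    ENNReal.mul_ne_top (by finiteness) ENNReal.ofReal_ne_top
  calc ‖∫ τ, symbolKernel a x τ * dilatedConv H
        (symbolKernel b ((x.1, 0) - H • τ) - symbolKernel b (x.1, 0)) u ((x.1, 0) - H • τ)‖ₑ
      ≤ ∫⁻ τ, ∫⁻ ρ, ‖symbolKernel a x τ *
          (symbolKernel b ((x.1, 0) - H • τ) - symbolKernel b (x.1, 0)) ρ‖ₑ *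
            ‖u ((x.1, 0) - H • τ - H • ρ)‖ₑ :=
        enorm_integral_mul_dilatedConv_le H _ _ u _
    _ ≤ ∫⁻ τ, ∫⁻ ρ, A * ENNReal.ofReal H * decayWeight 1 x * (decayWeight N τ * decayWeight N ρ) *
          ‖u ((x.1, 0) - H • τ - H • ρ)‖ₑ := by
        gcongr with τ ρ
        exact hkernel H hH x (x.1, 0) τ ρ
    _ = A * ENNReal.ofReal H * (decayWeight 1 x * ∫⁻ p : V m × V m,
          decayWeight N p.1 * decayWeight N p.2 * ‖u ((x.1, 0) - H • p.1 - H • p.2)‖ₑ) := by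
        rw [Measure.volume_eq_prod (V m), lintegral_prod _ (by fun_prop), ← mul_assoc]
        simp_rw [mul_assoc (A * _ * _), lintegral_const_mul' _ _ hconst]

lemma exists_lintegral_sq_opL_opS_sub_opL_le (a b : 𝓢(V m × V m, ℂ)) :
    ∃ K : ℝ≥0∞, K ≠ ∞ ∧ ∀ h : ℝ, 0 < h → ∀ u : V m → ℂ, Measurable u → Integrable u →
      ∫⁻ x, ‖OpL m h a (OpS m h b u) x -
          OpL m h (fun p => a p * b ((p.1.1, 0), p.2)) u x‖ₑ ^ 2 ≤
        K * ENNReal.ofReal h * ∫⁻ x, ‖u x‖ₑ ^ 2 := by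
  let N := m + 2
  obtain ⟨A, hA, hpointwise⟩ := exists_enorm_opL_opS_sub_opL_le a b N
  let B : ℝ≥0∞ := (∫⁻ τ : V m, decayWeight N τ) ^ 3 *
    (∫⁻ r : EuclideanSpace ℝ (Fin m), decayWeight N r) * ∫⁻ s : ℝ, decayWeight 2 s
  have hB : B ≠ ∞ := by
    refine ENNReal.mul_ne_top (ENNReal.mul_ne_top (ENNReal.pow_ne_top ?_) ?_) ?_ <;>
      exact lintegral_decayWeight_ne_top (by simp [N])
  refine ⟨A ^ 2 * B * ENNReal.ofReal (2 * Real.pi), by finiteness, fun h hh u hu hu' => ?_⟩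
  let H := 2 * Real.pi * h
  have hH : 0 < H := by positivity
  have hcancel : ENNReal.ofReal H ^ 2 * ENNReal.ofReal H⁻¹ =
      ENNReal.ofReal (2 * Real.pi) * ENNReal.ofReal h := by
    rw [sq, mul_assoc, ← ENNReal.ofReal_mul hH.le, mul_inv_cancel₀ hH.ne', ENNReal.ofReal_one,
      mul_one, ENNReal.ofReal_mul (by positivity)]
  calc ∫⁻ x, ‖OpL m h a (OpS m h b u) x -
          OpL m h (fun p => a p * b ((p.1.1, 0), p.2)) u x‖ₑ ^ 2
      ≤ (A * ENNReal.ofReal H) ^ 2 * (B * (ENNReal.ofReal H⁻¹ * ∫⁻ x, ‖u x‖ₑ ^ 2)) := by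
        grw [← lintegral_sq_decayWeight_mul_slice_le hu.enorm hH N]
        rw [← lintegral_const_mul' _ _ (by finiteness)]
        refine lintegral_mono fun x => ?_
        grw [hpointwise h hh u hu hu' x, mul_pow]
    _ = A ^ 2 * B * (ENNReal.ofReal H ^ 2 * ENNReal.ofReal H⁻¹) * ∫⁻ x, ‖u x‖ₑ ^ 2 := by ring
    _ = A ^ 2 * B * ENNReal.ofReal (2 * Real.pi) * ENNReal.ofReal h * ∫⁻ x, ‖u x‖ₑ ^ 2 := by
        rw [hcancel, ← mul_assoc (A ^ 2 * B)]

end Estimate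

theorem stmt_6_general (m : ℕ) (a b : 𝓢(V m × V m, ℂ)) :
    ∃ C > 0, ∀ h : ℝ, 0 < h → ∀ u : V m → ℂ, Integrable u →
      eLpNorm (fun x => OpL m h a (OpS m h b u) x -
          OpL m h (fun p => a p * b ((p.1.1, 0), p.2)) u x) 2 volume ≤
        ENNReal.ofReal (C * h ^ ((1 : ℝ) / 2)) * eLpNorm u 2 volume := by
  obtain ⟨K, hK, hbound⟩ := exists_lintegral_sq_opL_opS_sub_opL_le a b
  refine ⟨K.toReal + 1, by positivity, fun h hh u hu => ?_⟩
  have hconst : K * ENNReal.ofReal h ≤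
      ENNReal.ofReal ((K.toReal + 1) * h ^ ((1 : ℝ) / 2)) ^ 2 := by
    rw [← ENNReal.ofReal_toReal hK, ← ENNReal.ofReal_mul (by positivity),
      ← ENNReal.ofReal_pow (by positivity), ENNReal.toReal_ofReal (by positivity), mul_pow,
      ← Real.sqrt_eq_rpow, Real.sq_sqrt hh.le]
    gcongr
    nlinarith [K.toReal_nonneg]
  obtain ⟨v, hv, huv⟩ := hu.aemeasurable
  rw [opS_congr_ae _ huv, opL_congr_ae _ huv, eLpNorm_congr_ae huv]
  refine eLpNorm_two_le_of_lintegral_sq_le ?_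
  grw [← hconst]
  exact hbound h hh v hv (hu.congr huv)

/-- if `c(x,ξ) = a(x,ξ) b(x',0,ξ)` then
`‖(Op_h^Λ(a) ∘ Op_h(b))u − Op_h^Λ(c)u‖_{L²} ≤ C h^{1/2} ‖u‖_{L²}` for all `h ∈ (0,1]`. -/
theorem stmt_6 (m : ℕ) (a b c : SchwartzMap (V m × V m) ℂ)
    (hc : ∀ x ξ : V m, c (x, ξ) = a (x, ξ) * b ((x.1, (0:ℝ)), ξ)) :
    ∃ C > 0, ∀ h : ℝ, 0 < h → h ≤ 1 → ∀ u : SchwartzMap (V m) ℂ,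
      eLpNorm (fun x : V m => OpL m h ⇑a (OpS m h ⇑b ⇑u) x - OpL m h ⇑c ⇑u x) 2 volume ≤
        ENNReal.ofReal (C * h ^ ((1:ℝ)/2)) * eLpNorm (⇑u) 2 volume := by
  obtain ⟨C, hC, hbound⟩ := stmt_6_general m a b
  rw [show ⇑c = fun p => a p * b ((p.1.1, 0), p.2) from funext fun p => hc p.1 p.2]
  exact ⟨C, hC, fun h hh _ u => hbound h hh u u.integrable⟩
end
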